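/- Let k ≥ 3 and let x be a real number with x ≥ λ(D_k). Then (1/2)·(u_{k−1} − w_{k−1})^T (xI − D_{k−1})^{−1} (u_{k−1} − w_{k−1}) < k − 1. -/

import Mathlib

/-!
Write `n = k - 1`, `A = x I - D_n`, `z = u_n - w_n` and `y = A⁻¹ z`.
Reversing the path fixes `D_n` and negates `z`, so it negates `y`, whence `∑ i, y i = 0`.
The cuts of the path at its edges give `|i - j| = ∑ t, (c_t i - c_t j) ^ 2`, so `D_n` is negative
semidefinite on vectors with sum zero. Hence `z ⬝ y = y ⬝ A y ≥ x ‖y‖²`, and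
`0 ≤ ‖z - x y‖²` gives `z ⬝ A⁻¹ z ≤ ‖z‖² / x`, where `‖z‖² = n (n² - 1) / 3`.
Testing `D_{n+1}` on the all-ones vector gives `x ≥ n (n + 2) / 3`, so this is less than `2 n`.

That `A` is invertible is a Perron-type argument: the entries of `D_{n+1}` are nonnegative and those
off its diagonal are positive, so deleting a vertex strictly lowers the largest eigenvalue.
-/

open Matrix

noncomputable section

/-- Distance matrix of the path on `m` vertices: entry `(i,j)` is `|i - j|`. -/
def pathD (m : ℕ) : Matrix (Fin m) (Fin m) ℝ := fun i j => |(i : ℝ) - (j : ℝ)|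

/-- The vector `(1, 2, …, m)ᵀ`. -/
def uVec (m : ℕ) : Fin m → ℝ := fun i => (i : ℝ) + 1

/-- The reversed vector `(m, m-1, …, 1)ᵀ`. -/
def wVec (m : ℕ) : Fin m → ℝ := fun i => (m : ℝ) - (i : ℝ)

/-- Largest real eigenvalue of a matrix. -/
def maxEig {ι : Type} [Fintype ι] (A : Matrix ι ι ℝ) : ℝ :=
  sSup {μ : ℝ | ∃ v : ι → ℝ, v ≠ 0 ∧ A.mulVec v = μ • v}

section QuadraticForm

variable {ι : Type*} [Fintype ι]

theorem dotProduct_smul_one_sub_mulVec {R : Type*} [CommRing R] [DecidableEq ι]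
    (A : Matrix ι ι R) (x : R) (v : ι → R) :
    v ⬝ᵥ (x • (1 : Matrix ι ι R) - A) *ᵥ v = x * (v ⬝ᵥ v) - v ⬝ᵥ A *ᵥ v := by
  rw [sub_mulVec, smul_mulVec, one_mulVec, dotProduct_sub, dotProduct_smul, smul_eq_mul]

theorem dotProduct_mulVec_le_abs {R : Type*} [CommRing R] [LinearOrder R] [IsStrictOrderedRing R]
    {A : Matrix ι ι R} (hA : ∀ i j, 0 ≤ A i j) (v : ι → R) :
    v ⬝ᵥ A *ᵥ v ≤ |v| ⬝ᵥ A *ᵥ |v| := by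
  simp only [dotProduct, mulVec, Finset.mul_sum, Pi.abs_apply]
  refine Finset.sum_le_sum fun i _ => Finset.sum_le_sum fun j _ => ?_
  calc v i * (A i j * v j) ≤ |v i * (A i j * v j)| := le_abs_self _
    _ = |v i| * (A i j * |v j|) := by rw [abs_mul, abs_mul, abs_of_nonneg (hA i j)]

theorem dotProduct_le_div_of_smul_one_sub_mulVec_eq {K : Type*} [Field K] [LinearOrder K]
    [IsStrictOrderedRing K] [DecidableEq ι] {D : Matrix ι ι K} {x : K} (hx : 0 < x) {y z : ι → K}
    (hyz : (x • (1 : Matrix ι ι K) - D) *ᵥ y = z) (hy : y ⬝ᵥ D *ᵥ y ≤ 0) :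
    z ⬝ᵥ y ≤ z ⬝ᵥ z / x := by
  have hform : x * (y ⬝ᵥ y) ≤ z ⬝ᵥ y := by
    rw [dotProduct_comm z, ← hyz, dotProduct_smul_one_sub_mulVec]
    linarith
  have hsq : 0 ≤ z ⬝ᵥ z - 2 * x * (z ⬝ᵥ y) + x ^ 2 * (y ⬝ᵥ y) := calc
    0 ≤ (z - x • y) ⬝ᵥ (z - x • y) := Finset.sum_nonneg fun _ _ => mul_self_nonneg _
    _ = z ⬝ᵥ z - 2 * x * (z ⬝ᵥ y) + x ^ 2 * (y ⬝ᵥ y) := by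
      simp only [sub_dotProduct, dotProduct_sub, smul_dotProduct, dotProduct_smul, smul_eq_mul,
        dotProduct_comm y z]
      ring
  have hmul : x * (x * (y ⬝ᵥ y)) ≤ x * (z ⬝ᵥ y) := mul_le_mul_of_nonneg_left hform hx.le
  rw [le_div_iff₀ hx]
  linarith

theorem sum_sum_mul_mul_sub_sq {R : Type*} [CommRing R] {v : ι → R} (hv : ∑ i, v i = 0)
    (f : ι → R) :
    ∑ i, ∑ j, v i * v j * (f i - f j) ^ 2 = -2 * (∑ i, v i * f i) ^ 2 := by
  have hexpand (i j : ι) : v i * v j * (f i - f j) ^ 2 =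
      v i * f i ^ 2 * v j + v i * (v j * f j ^ 2) - 2 * (v i * f i * (v j * f j)) := by ring
  simp only [hexpand, Finset.sum_sub_distrib, Finset.sum_add_distrib, ← Finset.mul_sum,
    ← Finset.sum_mul, hv]
  ring

end QuadraticForm

section LargestEigenvalue

variable {ι : Type} [Fintype ι] {A : Matrix ι ι ℝ}

theorem maxEig_eq_sSup_spectrum [DecidableEq ι] (A : Matrix ι ι ℝ) :
    maxEig A = sSup (spectrum ℝ A) := by
  rw [maxEig, ← spectrum_toLin']
  congr 1 with μ
  rw [← Module.End.hasEigenvalue_iff_mem_spectrum, Module.End.hasEigenvalue_iff,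
    Submodule.ne_bot_iff]
  simp [and_comm]

theorem le_maxEig_of_mem_spectrum [DecidableEq ι] {μ : ℝ} (hμ : μ ∈ spectrum ℝ A) : μ ≤ maxEig A :=
  maxEig_eq_sSup_spectrum A ▸ le_csSup A.finite_spectrum.bddAbove hμ

open scoped Pointwise in
theorem posSemidef_smul_one_sub_of_maxEig_le [DecidableEq ι] (hA : A.IsHermitian) {x : ℝ}
    (hx : maxEig A ≤ x) :
    (x • (1 : Matrix ι ι ℝ) - A).PosSemidef := by
  have hM : (x • (1 : Matrix ι ι ℝ) - A).IsHermitian :=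
    (isHermitian_one.smul (.all x)).sub hA
  have hspec : spectrum ℝ (x • (1 : Matrix ι ι ℝ) - A) = {x} - spectrum ℝ A := by
    rw [spectrum.singleton_sub_eq, Algebra.algebraMap_eq_smul_one]
  rw [hM.posSemidef_iff_eigenvalues_nonneg]
  intro i
  obtain ⟨_, rfl, μ, hμ, h⟩ := hspec.subset (hM.eigenvalues_mem_spectrum_real i)
  rw [← h]
  exact sub_nonneg.2 ((le_maxEig_of_mem_spectrum hμ).trans hx)

theorem dotProduct_mulVec_le_maxEig_mul (hA : A.IsHermitian) (v : ι → ℝ) :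
    v ⬝ᵥ A *ᵥ v ≤ maxEig A * (v ⬝ᵥ v) := by
  classical
  have h := (posSemidef_smul_one_sub_of_maxEig_le hA le_rfl).dotProduct_mulVec_nonneg v
  rwa [star_trivial, dotProduct_smul_one_sub_mulVec, sub_nonneg] at h

end LargestEigenvalue

section PrincipalSubmatrix

variable {n : ℕ}

theorem vecCons_zero_dotProduct_mulVec {R : Type*} [NonUnitalNonAssocSemiring R]
    (M : Matrix (Fin (n + 1)) (Fin (n + 1)) R) (v : Fin n → R) :
    vecCons 0 v ⬝ᵥ M *ᵥ vecCons 0 v = v ⬝ᵥ M.submatrix Fin.succ Fin.succ *ᵥ v := by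
  simp [dotProduct, mulVec, Fin.sum_univ_succ]

theorem smul_one_sub_submatrix_succ {R : Type*} [Ring R]
    (A : Matrix (Fin (n + 1)) (Fin (n + 1)) R) (x : R) :
    (x • (1 : Matrix (Fin (n + 1)) (Fin (n + 1)) R) - A).submatrix Fin.succ Fin.succ =
      x • (1 : Matrix (Fin n) (Fin n) R) - A.submatrix Fin.succ Fin.succ := by
  ext i j
  simp [one_apply]

theorem posDef_smul_one_sub_submatrix_succ {A : Matrix (Fin (n + 1)) (Fin (n + 1)) ℝ} {x : ℝ}
    (hA : ∀ i j : Fin n, 0 ≤ A i.succ j.succ) (hrow : ∀ j : Fin n, 0 < A 0 j.succ)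
    (h : (x • (1 : Matrix (Fin (n + 1)) (Fin (n + 1)) ℝ) - A).PosSemidef) :
    (x • (1 : Matrix (Fin n) (Fin n) ℝ) - A.submatrix Fin.succ Fin.succ).PosDef := by
  refine .of_dotProduct_mulVec_pos
    (smul_one_sub_submatrix_succ A x ▸ h.isHermitian.submatrix _) fun v hv => ?_
  by_contra! hle
  -- A nonpositive form at `v` puts `(0, |v|)` in the kernel of `x • 1 - A`; row `0` then kills `v`.
  set w : Fin (n + 1) → ℝ := vecCons 0 |v| with hw
  have habs : |v| ⬝ᵥ |v| = v ⬝ᵥ v := by simp [dotProduct]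
  have hform : w ⬝ᵥ (x • (1 : Matrix (Fin (n + 1)) (Fin (n + 1)) ℝ) - A) *ᵥ w ≤ 0 := by
    rw [hw, vecCons_zero_dotProduct_mulVec, smul_one_sub_submatrix_succ]
    rw [star_trivial] at hle
    rw [dotProduct_smul_one_sub_mulVec] at hle ⊢
    rw [habs]
    exact (sub_le_sub_left (dotProduct_mulVec_le_abs hA v) _).trans hle
  have hker : (x • (1 : Matrix (Fin (n + 1)) (Fin (n + 1)) ℝ) - A) *ᵥ w = 0 :=
    (h.dotProduct_mulVec_zero_iff w).1 (hform.antisymm (h.dotProduct_mulVec_nonneg w))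
  have hsum : ∑ j : Fin n, A 0 j.succ * |v j| = 0 := by
    have := congrFun hker 0
    rw [sub_mulVec, smul_mulVec, one_mulVec] at this
    simpa [hw, mulVec, dotProduct, Fin.sum_univ_succ] using this
  rw [Finset.sum_eq_zero_iff_of_nonneg fun j _ => mul_nonneg (hrow j).le (abs_nonneg _)] at hsum
  exact hv (funext fun j => by simpa [(hrow j).ne'] using hsum j (Finset.mem_univ j))

end PrincipalSubmatrix

section Symmetry

variable {ι : Type*} [Fintype ι]

theorem inv_mulVec_comp_equiv {R : Type*} [CommRing R] [DecidableEq ι] {A : Matrix ι ι R}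
    {e : ι ≃ ι} (hA : A.submatrix e e = A) (v : ι → R) : A⁻¹ *ᵥ (v ∘ e) = (A⁻¹ *ᵥ v) ∘ e := by
  have hinv : A⁻¹.submatrix e e = A⁻¹ := by rw [← inv_submatrix_equiv, hA]
  calc A⁻¹ *ᵥ (v ∘ e) = A⁻¹.submatrix e e *ᵥ (v ∘ e) := by rw [hinv]
    _ = (A⁻¹ *ᵥ v) ∘ e := by simp [submatrix_mulVec_equiv, Function.comp_assoc]

theorem sum_eq_zero_of_comp_equiv_eq_neg {M : Type*} [AddCommGroup M] [IsAddTorsionFree M]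
    {y : ι → M} (e : ι ≃ ι) (hy : y ∘ e = -y) : ∑ i, y i = 0 := by
  refine self_eq_neg.1 ?_
  calc ∑ i, y i = ∑ i, (y ∘ e) i := (e.sum_comp y).symm
    _ = -∑ i, y i := by simp only [hy, Pi.neg_apply, Finset.sum_neg_distrib]

end Symmetry

section CutDecomposition

/-- The indicator of `t < i`: the cut of the path `0, 1, 2, …` at its edge `{t, t + 1}`. -/
def cutVec (t i : ℕ) : ℝ := if t < i then 1 else 0

theorem abs_natCast_sub_eq_sum_cutVec {i j N : ℕ} (hi : i ≤ N) (hj : j ≤ N) :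
    |(i : ℝ) - j| = ∑ t ∈ Finset.range N, (cutVec t i - cutVec t j) ^ 2 := by
  wlog hij : i ≤ j generalizing i j
  · rw [abs_sub_comm, this hj hi (le_of_not_ge hij)]
    exact Finset.sum_congr rfl fun t _ => sub_sq_comm _ _
  have hterm (t : ℕ) : (cutVec t i - cutVec t j) ^ 2 =
      if t ∈ Finset.Ico i j then 1 else 0 := by
    grind [cutVec]
  have hsub : Finset.Ico i j ⊆ Finset.range N := by grind
  have hle : (i : ℝ) ≤ j := by exact_mod_cast hij
  simp only [hterm, Finset.sum_ite_mem, Finset.inter_eq_right.2 hsub]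
  simp [abs_sub_comm (i : ℝ), abs_of_nonneg (sub_nonneg.2 hle), hij]

theorem dotProduct_pathD_mulVec_of_sum_eq_zero {n : ℕ} {v : Fin n → ℝ} (hv : ∑ i, v i = 0) :
    v ⬝ᵥ pathD n *ᵥ v = -2 * ∑ t ∈ Finset.range n, (∑ i, v i * cutVec t i) ^ 2 := by
  have hcut (i j : Fin n) : v i * (pathD n i j * v j) =
      ∑ t ∈ Finset.range n, v i * v j * (cutVec t i - cutVec t j) ^ 2 := by
    rw [← Finset.mul_sum, ← abs_natCast_sub_eq_sum_cutVec i.isLt.le j.isLt.le, pathD]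
    ring
  calc v ⬝ᵥ pathD n *ᵥ v
      = ∑ i, ∑ j, ∑ t ∈ Finset.range n, v i * v j * (cutVec t i - cutVec t j) ^ 2 := by
        simp only [dotProduct, mulVec, Finset.mul_sum, hcut]
    _ = ∑ t ∈ Finset.range n, ∑ i, ∑ j, v i * v j * (cutVec t i - cutVec t j) ^ 2 := by
        simp only [Finset.sum_comm (t := Finset.range n)]
    _ = -2 * ∑ t ∈ Finset.range n, (∑ i, v i * cutVec t i) ^ 2 := by
        simp only [sum_sum_mul_mul_sub_sq hv, Finset.mul_sum]

theorem dotProduct_pathD_mulVec_nonpos {n : ℕ} {v : Fin n → ℝ} (hv : ∑ i, v i = 0) :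
    v ⬝ᵥ pathD n *ᵥ v ≤ 0 := by
  rw [dotProduct_pathD_mulVec_of_sum_eq_zero hv]
  exact mul_nonpos_of_nonpos_of_nonneg (by norm_num) (Finset.sum_nonneg fun _ _ => sq_nonneg _)

end CutDecomposition

section PathDistanceMatrix

variable {n : ℕ}

theorem isHermitian_pathD (n : ℕ) : (pathD n).IsHermitian := by
  ext i j
  simp [pathD, abs_sub_comm]

theorem pathD_submatrix_succ (n : ℕ) : (pathD (n + 1)).submatrix Fin.succ Fin.succ = pathD n := by
  ext i j
  simp [pathD]

theorem pathD_zero_succ (j : Fin n) : pathD (n + 1) 0 j.succ = uVec n j := by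
  have hj : (0 : ℝ) ≤ j + 1 := by positivity
  rw [pathD, abs_sub_comm]
  simp [uVec, abs_of_nonneg hj]

theorem posDef_smul_one_sub_pathD {x : ℝ} (hx : maxEig (pathD (n + 1)) ≤ x) :
    (x • (1 : Matrix (Fin n) (Fin n) ℝ) - pathD n).PosDef := by
  rw [← pathD_submatrix_succ]
  refine posDef_smul_one_sub_submatrix_succ (fun _ _ => abs_nonneg _) (fun j => ?_)
    (posSemidef_smul_one_sub_of_maxEig_le (isHermitian_pathD _) hx)
  rw [pathD_zero_succ, uVec]
  positivity

theorem sum_uVec (n : ℕ) : ∑ i, uVec n i = n * (n + 1) / 2 := by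
  induction n with
  | zero => simp
  | succ n ih =>
    simp only [uVec, Fin.sum_univ_castSucc, Fin.val_castSucc, Fin.val_last] at ih ⊢
    rw [ih]
    push_cast
    ring

theorem sum_sum_pathD (n : ℕ) : ∑ i, ∑ j, pathD n i j = n * (n ^ 2 - 1) / 3 := by
  induction n with
  | zero => simp
  | succ n ih =>
    have hcorner : pathD (n + 1) 0 0 = 0 := by simp [pathD]
    have hcol (i : Fin n) : pathD (n + 1) i.succ 0 = uVec n i := by
      rw [← pathD_zero_succ, ← (isHermitian_pathD _).apply, star_trivial]
    have hblock (i j : Fin n) : pathD (n + 1) i.succ j.succ = pathD n i j := by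
      rw [← pathD_submatrix_succ n, submatrix_apply]
    simp only [Fin.sum_univ_succ, Finset.sum_add_distrib, hcorner, pathD_zero_succ, hcol, hblock,
      sum_uVec, ih]
    push_cast
    ring

theorem le_maxEig_pathD (n : ℕ) : n * (n + 2) / 3 ≤ maxEig (pathD (n + 1)) := by
  have hform : (1 : Fin (n + 1) → ℝ) ⬝ᵥ pathD (n + 1) *ᵥ 1 = n * (n + 2) / 3 * (n + 1) := by
    rw [one_dotProduct]
    simp only [mulVec, dotProduct_one, sum_sum_pathD]
    push_cast
    ring
  have hnorm : (1 : Fin (n + 1) → ℝ) ⬝ᵥ 1 = n + 1 := by simp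
  have h := dotProduct_mulVec_le_maxEig_mul (isHermitian_pathD (n + 1)) 1
  rw [hform, hnorm] at h
  exact le_of_mul_le_mul_right h (by positivity)

theorem uVec_comp_revPerm (n : ℕ) : uVec n ∘ Fin.revPerm = wVec n := by
  ext i
  simp only [Function.comp_apply, Fin.revPerm_apply, uVec, wVec, Fin.val_rev,
    Nat.cast_sub i.isLt]
  push_cast
  ring

theorem wVec_comp_revPerm (n : ℕ) : wVec n ∘ Fin.revPerm = uVec n := by
  ext i
  simp [← uVec_comp_revPerm]

theorem pathD_submatrix_revPerm (n : ℕ) :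
    (pathD n).submatrix Fin.revPerm Fin.revPerm = pathD n := by
  have hw (i j : Fin n) : pathD n i j = |wVec n i - wVec n j| := by
    simp [pathD, wVec, abs_sub_comm]
  have hu (i j : Fin n) : pathD n i j = |uVec n i - uVec n j| := by
    simp [pathD, uVec]
  ext i j
  rw [submatrix_apply, hu, hw, ← uVec_comp_revPerm]
  rfl

theorem sum_two_mul_add_one_sub_sq (n : ℕ) (c : ℝ) :
    ∑ i : Fin n, (2 * (i : ℝ) + 1 - c) ^ 2 =
      n * (4 * n ^ 2 - 1) / 3 - 2 * c * n ^ 2 + n * c ^ 2 := by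
  induction n with
  | zero => simp
  | succ n ih =>
    simp only [Fin.sum_univ_castSucc, Fin.val_castSucc, Fin.val_last, ih]
    push_cast
    ring

theorem uVec_sub_wVec_dotProduct_self (n : ℕ) :
    (uVec n - wVec n) ⬝ᵥ (uVec n - wVec n) = n * (n ^ 2 - 1) / 3 := by
  have happly (i : Fin n) : (uVec n - wVec n) i = 2 * i + 1 - n := by
    simp only [Pi.sub_apply, uVec, wVec]
    ring
  simp only [dotProduct, happly, ← sq, sum_two_mul_add_one_sub_sq]
  ring

theorem uVec_sub_wVec_dotProduct_inv_mulVec_le {x : ℝ} (hx : 0 < x)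
    (hunit : IsUnit (x • (1 : Matrix (Fin n) (Fin n) ℝ) - pathD n)) :
    (uVec n - wVec n) ⬝ᵥ (x • (1 : Matrix (Fin n) (Fin n) ℝ) - pathD n)⁻¹ *ᵥ (uVec n - wVec n) ≤
      n * (n ^ 2 - 1) / 3 / x := by
  set A := x • (1 : Matrix (Fin n) (Fin n) ℝ) - pathD n with hA
  set z := uVec n - wVec n with hz
  have hrev : A.submatrix Fin.revPerm Fin.revPerm = A := by
    simp [hA, submatrix_sub, submatrix_smul, pathD_submatrix_revPerm]
  have hz_odd : z ∘ Fin.revPerm = -z := by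
    rw [hz, Pi.sub_comp, uVec_comp_revPerm, wVec_comp_revPerm, neg_sub]
  have hodd : (A⁻¹ *ᵥ z) ∘ Fin.revPerm = -(A⁻¹ *ᵥ z) := by
    rw [← inv_mulVec_comp_equiv hrev, hz_odd, mulVec_neg]
  have hsolve : A *ᵥ A⁻¹ *ᵥ z = z := by
    rw [mulVec_mulVec, mul_nonsing_inv _ ((isUnit_iff_isUnit_det A).1 hunit), one_mulVec]
  rw [← uVec_sub_wVec_dotProduct_self]
  exact dotProduct_le_div_of_smul_one_sub_mulVec_eq hx hsolve
    (dotProduct_pathD_mulVec_nonpos (sum_eq_zero_of_comp_equiv_eq_neg _ hodd))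

end PathDistanceMatrix

/-- For `k ≥ 3` and `x ≥ λ(D_k)`:
`½ (u_{k-1} − w_{k-1})^T (xI − D_{k-1})⁻¹ (u_{k-1} − w_{k-1}) < k − 1`. -/
theorem gamma_lt_k_sub_one
    (k : ℕ) (hk : 3 ≤ k) (x : ℝ) (hx : maxEig (pathD k) ≤ x) :
    (1 / 2) *
        ((uVec (k - 1) - wVec (k - 1)) ⬝ᵥ
          ((x • (1 : Matrix (Fin (k - 1)) (Fin (k - 1)) ℝ) - pathD (k - 1))⁻¹).mulVec
            (uVec (k - 1) - wVec (k - 1))) < (k : ℝ) - 1 := by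
  obtain ⟨n, rfl⟩ : ∃ n, k = n + 1 := ⟨k - 1, by omega⟩
  rw [Nat.add_sub_cancel]
  have hn : (0 : ℝ) < n := by exact_mod_cast (by omega : 0 < n)
  have hx_lower : n * (n + 2) / 3 ≤ x := (le_maxEig_pathD n).trans hx
  have hx_pos : 0 < x := lt_of_lt_of_le (by positivity) hx_lower
  have hform := uVec_sub_wVec_dotProduct_inv_mulVec_le hx_pos (posDef_smul_one_sub_pathD hx).isUnit
  have hbound : (n : ℝ) * (n ^ 2 - 1) / 3 / x < 2 * n := by
    rw [div_lt_iff₀ hx_pos]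
    calc (n : ℝ) * (n ^ 2 - 1) / 3 < 2 * n * (n * (n + 2) / 3) := by
          have : (0 : ℝ) < n * (n ^ 2 + 4 * n + 1) := by positivity
          linarith
      _ ≤ 2 * n * x := by gcongr
  push_cast
  linarith
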